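/- Fix ε ∈ (0,1). For each even n, let S = {1,…,n/2} and let A be the adjacency matrix of the complete community-structure graph: A_{ij} = 1 if i and j both lie in S or both lie in S^c = {n/2+1,…,n}, and A_{ij} = 0 otherwise. Then there exists m(ε) > 0 with m(ε) → 1 as ε → 0⁺ such that, for every even n, every minimizer u ∈ ℝⁿ of GL^A_ε subject to Σ_{i=1}^n u_i = 0 is one of the two vectors given by u_i = σ·m(ε) for i ∈ S and u_i = −σ·m(ε) for i ∈ S^c, where σ ∈ {−1, 1}. -/

import Mathlib

open Filter
open scoped Classical

noncomputable section

/-- The double-well potential `Φ(s) = (s² − 1)²`. -/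
def Phi (s : ℝ) : ℝ := (s ^ 2 - 1) ^ 2

/-- The graph Ginzburg–Landau functional
`GL^A_ε(u) = (1/n²) Σ_{i,j} A_{ij}(u_i−u_j)² + (1/(εn)) Σ_i Φ(u_i)`. -/
def glGraph (n : ℕ) (A : Fin n → Fin n → ℝ) (ε : ℝ) (u : Fin n → ℝ) : ℝ :=
  (1 / (n : ℝ) ^ 2) * ∑ i : Fin n, ∑ j : Fin n, A i j * (u i - u j) ^ 2
    + (1 / (ε * n)) * ∑ i : Fin n, Phi (u i)

/-- Adjacency matrix of the complete community-structure graph with communities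
`S = {i : i < n/2}` and `S^c`: `A_{ij} = 1` iff `i` and `j` lie in the same community. -/
def communityA (n : ℕ) : Fin n → Fin n → ℝ :=
  fun i j => if (((i : ℕ) < n / 2) ↔ ((j : ℕ) < n / 2)) then 1 else 0

/-! Both terms of the functional are nonnegative, and the vector equal to `1` on `S` and `-1` on
`Sᶜ` has mean zero and energy zero. Hence for every `ε > 0` the minimizers are exactly the mean-zero
vectors of energy zero: those with values `±1` that are constant on each community. As the
communities have equal size, the two constants are opposite, so `m(ε) = 1`. -/

theorem Phi_nonneg (s : ℝ) : 0 ≤ Phi s :=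
  sq_nonneg _

theorem Phi_eq_zero_iff {s : ℝ} : Phi s = 0 ↔ s = 1 ∨ s = -1 := by
  rw [Phi, sq_eq_zero_iff, sub_eq_zero, sq_eq_one_iff]

section DirichletEnergy

variable {ι R : Type*} [Fintype ι] [Ring R] [LinearOrder R] [IsStrictOrderedRing R] {A : ι → ι → R}

theorem sum_mul_sq_sub_nonneg (hA : ∀ i j, 0 ≤ A i j) (u : ι → R) :
    0 ≤ ∑ i, ∑ j, A i j * (u i - u j) ^ 2 :=
  Finset.sum_nonneg fun i _ => Finset.sum_nonneg fun j _ => mul_nonneg (hA i j) (sq_nonneg _)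

theorem sum_mul_sq_sub_eq_zero_iff (hA : ∀ i j, 0 ≤ A i j) {u : ι → R} :
    ∑ i, ∑ j, A i j * (u i - u j) ^ 2 = 0 ↔ ∀ i j, A i j = 0 ∨ u i = u j := by
  have hterm (i : ι) : 0 ≤ fun j => A i j * (u i - u j) ^ 2 :=
    fun j => mul_nonneg (hA i j) (sq_nonneg _)
  have hrow : 0 ≤ fun i => ∑ j, A i j * (u i - u j) ^ 2 :=
    fun i => Fintype.sum_nonneg (hterm i)
  simp only [Fintype.sum_eq_zero_iff_of_nonneg hrow,
    fun i => Fintype.sum_eq_zero_iff_of_nonneg (hterm i), funext_iff, Pi.zero_apply, mul_eq_zero,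
    sq_eq_zero_iff, sub_eq_zero]

end DirichletEnergy

section GinzburgLandau

variable {n : ℕ} {A : Fin n → Fin n → ℝ} {ε : ℝ}

theorem glGraph_nonneg (hA : ∀ i j, 0 ≤ A i j) (hε : 0 ≤ ε) (u : Fin n → ℝ) :
    0 ≤ glGraph n A ε u :=
  add_nonneg (mul_nonneg (by positivity) (sum_mul_sq_sub_nonneg hA u))
    (mul_nonneg (by positivity) (Finset.sum_nonneg fun i _ => Phi_nonneg (u i)))

theorem glGraph_eq_zero_iff (hA : ∀ i j, 0 ≤ A i j) (hε : 0 < ε) {u : Fin n → ℝ} :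
    glGraph n A ε u = 0 ↔ (∀ i j, A i j = 0 ∨ u i = u j) ∧ ∀ i, u i = 1 ∨ u i = -1 := by
  rcases n.eq_zero_or_pos with rfl | hn
  · simp [glGraph]
  have hdirichlet : 0 < 1 / (n : ℝ) ^ 2 := by positivity
  have hwell : 0 < 1 / (ε * n) := by positivity
  have hPhi : ∀ i, 0 ≤ Phi (u i) := fun i => Phi_nonneg (u i)
  rw [glGraph, add_eq_zero_iff_of_nonneg
      (mul_nonneg hdirichlet.le (sum_mul_sq_sub_nonneg hA u))
      (mul_nonneg hwell.le (Finset.sum_nonneg fun i _ => hPhi i)),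
    mul_eq_zero_iff_left hdirichlet.ne', mul_eq_zero_iff_left hwell.ne',
    sum_mul_sq_sub_eq_zero_iff hA, Fintype.sum_eq_zero_iff_of_nonneg hPhi]
  simp only [funext_iff, Pi.zero_apply, Phi_eq_zero_iff]

end GinzburgLandau

section Community

variable {n : ℕ} {ε : ℝ} {u : Fin n → ℝ}

/-- The vector equal to `a` on the community `S = {i : i < n/2}` and to `b` on `Sᶜ`. -/
def communityVec (n : ℕ) (a b : ℝ) : Fin n → ℝ :=
  fun i => if (i : ℕ) < n / 2 then a else b

theorem sum_communityVec (hn : Even n) (a b : ℝ) :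
    ∑ i, communityVec n a b i = (n / 2 : ℕ) * (a + b) := by
  obtain ⟨k, rfl⟩ := hn
  have hhalf : (k + k) / 2 = k := by lia
  simp [communityVec, hhalf, Fin.sum_univ_add, mul_add]

theorem exists_eq_communityVec_iff :
    (∃ a b, u = communityVec n a b) ↔
      ∀ i j : Fin n, ((i : ℕ) < n / 2 ↔ (j : ℕ) < n / 2) → u i = u j := by
  constructor
  · rintro ⟨a, b, rfl⟩ i j hij
    simp only [communityVec, hij]
  · intro hconst
    obtain ⟨e, rfl⟩ := (Function.factorsThrough_iff (f := fun i : Fin n => (i : ℕ) < n / 2) u).1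
      fun i j hij => hconst i j (iff_of_eq hij)
    refine ⟨e True, e False, funext fun i => ?_⟩
    by_cases hi : (i : ℕ) < n / 2 <;> simp [communityVec, hi]

theorem communityA_nonneg (i j : Fin n) : 0 ≤ communityA n i j := by
  unfold communityA
  split_ifs <;> norm_num

theorem communityA_eq_zero_iff {i j : Fin n} :
    communityA n i j = 0 ↔ ¬((i : ℕ) < n / 2 ↔ (j : ℕ) < n / 2) := by
  simp only [communityA, ite_eq_right_iff, one_ne_zero, imp_false]

theorem glGraph_communityA_eq_zero_iff (hε : 0 < ε) :
    glGraph n (communityA n) ε u = 0 ↔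
      (∃ a b, u = communityVec n a b) ∧ ∀ i, u i = 1 ∨ u i = -1 := by
  simp only [glGraph_eq_zero_iff communityA_nonneg hε, communityA_eq_zero_iff,
    exists_eq_communityVec_iff, imp_iff_not_or]

theorem sum_eq_zero_and_glGraph_communityA_eq_zero_iff (hε : 0 < ε) (hn : Even n) :
    (∑ i, u i = 0 ∧ glGraph n (communityA n) ε u = 0) ↔
      ∃ σ : ℝ, (σ = 1 ∨ σ = -1) ∧ u = communityVec n σ (-σ) := by
  rw [glGraph_communityA_eq_zero_iff hε]
  constructor
  · rintro ⟨hsum, ⟨a, b, rfl⟩, hval⟩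
    rcases n.eq_zero_or_pos with rfl | hpos
    · exact ⟨1, Or.inl rfl, Subsingleton.elim _ _⟩
    have hhalf : 0 < n / 2 := by grind
    have hb : b = -a := by
      rw [sum_communityVec hn] at hsum
      have hab := (mul_eq_zero.1 hsum).resolve_left (by positivity)
      linarith
    have ha : a = 1 ∨ a = -1 := by
      simpa only [communityVec, if_pos hhalf] using hval ⟨0, hpos⟩
    exact ⟨a, ha, by rw [hb]⟩
  · rintro ⟨σ, hσ, rfl⟩
    refine ⟨by rw [sum_communityVec hn, add_neg_cancel, mul_zero], ⟨σ, -σ, rfl⟩, fun i => ?_⟩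
    grind [communityVec]

theorem community_minimizers_general (hε : 0 < ε) (hn : Even n) :
    (∑ i, u i = 0 ∧ ∀ v : Fin n → ℝ, ∑ i, v i = 0 →
        glGraph n (communityA n) ε u ≤ glGraph n (communityA n) ε v) ↔
      ∃ σ : ℝ, (σ = 1 ∨ σ = -1) ∧ u = fun i : Fin n => if (i : ℕ) < n / 2 then σ else -σ := by
  have hnonneg := glGraph_nonneg (n := n) communityA_nonneg hε.le
  obtain ⟨hw_sum, hw⟩ := (sum_eq_zero_and_glGraph_communityA_eq_zero_iff hε hn).2
    ⟨1, Or.inl rfl, rfl⟩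
  refine Iff.trans (and_congr_right fun _ => ?_)
    (sum_eq_zero_and_glGraph_communityA_eq_zero_iff hε hn)
  exact ⟨fun hmin => le_antisymm (hw ▸ hmin _ hw_sum) (hnonneg u),
    fun hu v _ => hu.trans_le (hnonneg v)⟩

end Community

/-- Characterization of the Ginzburg–Landau minimizers on complete community-structure
graphs with two equal communities: minimizers are `±m(ε)` on the two communities, with
`m(ε) → 1` as `ε → 0⁺`. -/
theorem community_minimizers :
    ∃ m : ℝ → ℝ, (∀ ε ∈ Set.Ioo (0 : ℝ) 1, 0 < m ε) ∧
      Tendsto m (nhdsWithin 0 (Set.Ioi 0)) (nhds 1) ∧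
      ∀ ε ∈ Set.Ioo (0 : ℝ) 1, ∀ n : ℕ, Even n →
        ∀ u : Fin n → ℝ,
          ((∑ i : Fin n, u i) = 0 ∧
            ∀ v : Fin n → ℝ, (∑ i : Fin n, v i) = 0 →
              glGraph n (communityA n) ε u ≤ glGraph n (communityA n) ε v) →
          ∃ σ : ℝ, (σ = 1 ∨ σ = -1) ∧
            u = fun i : Fin n => if (i : ℕ) < n / 2 then σ * m ε else -σ * m ε := by
  refine ⟨fun _ => 1, fun _ _ => one_pos, tendsto_const_nhds, fun ε hε n hn u hu => ?_⟩
  simpa only [mul_one] using (community_minimizers_general hε.1 hn).1 hu
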